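/- For every n of the form n = 2^k with k ≥ 2, puso(n) ≥ 2^(2^(n−1−k)+1), where puso(n) is the number of outmaps φ mapping subsets of {1,…,n} to subsets of {1,…,n} that are PUSOs of the full face [∅,{1,…,n}] of the standard n-cube. (Equivalently, since n = 2^k, the lower bound is 2^(2^(n−1−log₂ n)+1).) -/

import Mathlib

/-!
By a Szabó–Welzl type argument, an outmap `φ` with `φ Vᶜ = φ V` is a PUSO once `φ U ∆ φ V` meets
`U ∆ V` whenever `U` and `V` are neither equal nor complementary. Arrange the coordinates in one
cycle `σ`. The outmap `V ↦ ∂V`, with `∂V` the set of places where membership in `V` changes along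
the cycle, is of this kind: for `W = U ∆ V`, exactly half of `∂W = ∂U ∆ ∂V` lies in `W`, and
`∂W = ∅` only for `W = ∅` and its complement.

Now let `F` be a family of sets such that every set has at most one neighbour in `F`, and redirect:
a vertex `V'` with `∂V' ∆ {x} ∈ F` transfers its value `∂V'` to the vertex `V = V' ∆ {x}`. The
resulting outmap is again a PUSO, because for two values `A ≠ B` the set `S` of the directions
leading from exactly one of `A` and `B` into `F` never bisects `A ∆ B`. Indeed `S` has at most two
elements. If `A ∆ B = {a, b}` and `a` leads from `A` to `C ∈ F`, then `b` leads from `B` to `C`, so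
`S` contains both or neither of `a` and `b`. If `S` were half of a four-element `A ∆ B`, then the
neighbours of `A` and `B` in `F` would be at distance two. Different families of sets of odd size
give different outmaps, and adding a fixed singleton to all values, which changes their parity,
doubles their number.

Labelling the `n` coordinates by distinct elements of `(ℤ/2)^k`, where `n ≤ 2^k`, any family with
constant sum of labels has the required property, since toggling different coordinates changes the
sum differently. As `∂` is two-to-one, the pigeonhole principle gives such a family of size
`2^(n-1) / 2^k`. For `n = 2^k` it is a coset of the extended Hamming code.
-/

open Finset
open scoped symmDiff

/-- `V` is a sink of the face `[A,B]` of the standard cube (vertices are subsets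
of `{1,…,n}`) under the outmap `φ`: `V` belongs to the face and `φ V` has no
coordinate in the carrier `B \ A`. -/
def IsSink (φ : Finset ℕ → Finset ℕ) (A B V : Finset ℕ) : Prop :=
  A ⊆ V ∧ V ⊆ B ∧ φ V ∩ (B \ A) = ∅

/-- The face `[A,B]` has exactly one sink under `φ`. -/
def HasUniqueSink (φ : Finset ℕ → Finset ℕ) (A B : Finset ℕ) : Prop :=
  ∃! V, IsSink φ A B V

/-- `φ` is a USO of the face `[A,B]`: every face contained in `[A,B]`
(including `[A,B]` itself) has exactly one sink under `φ`. -/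
def IsUSO (φ : Finset ℕ → Finset ℕ) (A B : Finset ℕ) : Prop :=
  A ⊆ B ∧ ∀ A' B' : Finset ℕ, A ⊆ A' → A' ⊆ B' → B' ⊆ B → HasUniqueSink φ A' B'

/-- `φ` is a PUSO of the face `[A,B]`: `[A,B]` does not have exactly one sink
under `φ`, but every proper face contained in `[A,B]` has exactly one sink. -/
def IsPUSO (φ : Finset ℕ → Finset ℕ) (A B : Finset ℕ) : Prop :=
  A ⊆ B ∧ ¬ HasUniqueSink φ A B ∧
    ∀ A' B' : Finset ℕ, A ⊆ A' → A' ⊆ B' → B' ⊆ B → ¬(A' = A ∧ B' = B) →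
      HasUniqueSink φ A' B'

/-- The set of outmaps of the standard `n`-cube (normalized: mapping subsets of
`{1,…,n}` to subsets of `{1,…,n}` and `∅` elsewhere) that are PUSOs of the full
face `[∅,{1,…,n}]`. -/
def PUSOOutmaps (n : ℕ) : Set (Finset ℕ → Finset ℕ) :=
  {φ | (∀ V : Finset ℕ, V ⊆ Finset.Icc 1 n → φ V ⊆ Finset.Icc 1 n) ∧
       (∀ V : Finset ℕ, ¬ V ⊆ Finset.Icc 1 n → φ V = ∅) ∧
       IsPUSO φ ∅ (Finset.Icc 1 n)}

/-- `puso n`: the number of outmaps of the standard `n`-cube that are PUSOs of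
the full face. -/
noncomputable def pusoCount (n : ℕ) : ℕ := (PUSOOutmaps n).ncard

/-! ### Unique sinks from injectivity -/

theorem hasUniqueSink_of_injOn {φ : Finset ℕ → Finset ℕ} {A B : Finset ℕ} (hAB : A ⊆ B)
    (hφ : Set.InjOn (fun V => φ V ∩ (B \ A)) (Finset.Icc A B : Finset (Finset ℕ))) :
    HasUniqueSink φ A B := by
  have hsurj : Set.SurjOn (fun V => φ V ∩ (B \ A)) (Finset.Icc A B : Finset (Finset ℕ))
      ((B \ A).powerset : Finset (Finset ℕ)) := by
    refine surjOn_of_injOn_of_card_le _ (fun V _ => by simp) hφ ?_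
    rw [card_Icc_finset hAB, card_powerset, card_sdiff_of_subset hAB]
  obtain ⟨V, hV, hsink⟩ := hsurj (mem_coe.2 (empty_mem_powerset _))
  have hVAB : A ≤ V ∧ V ≤ B := by simpa using hV
  refine ⟨V, ⟨hVAB.1, hVAB.2, hsink⟩, fun U ⟨hAU, hUB, hU⟩ => ?_⟩
  exact hφ (mem_coe.2 (Finset.mem_Icc.2 ⟨hAU, hUB⟩)) hV (hU.trans hsink.symm)

theorem isPUSO_of_antipodal {φ : Finset ℕ → Finset ℕ} {N : Finset ℕ} (hN : N.Nonempty)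
    (hanti : ∀ V ⊆ N, φ (N \ V) = φ V)
    (hφ : ∀ U ⊆ N, ∀ V ⊆ N, Disjoint (φ U ∆ φ V) (U ∆ V) → U = V ∨ U = N \ V) :
    IsPUSO φ ∅ N := by
  refine ⟨empty_subset _, ?_, fun A B _ hAB hBN hproper => hasUniqueSink_of_injOn hAB ?_⟩
  · rintro ⟨V, ⟨-, hVN, hsink⟩, hunique⟩
    have hself : N \ V = V :=
      hunique _ ⟨empty_subset _, sdiff_subset, by rw [hanti V hVN]; exact hsink⟩
    obtain ⟨x, hx⟩ := hN
    grind
  · intro U hU V hV hUV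
    simp only [coe_Icc, Set.mem_Icc] at hU hV
    have hdisj : Disjoint (φ U ∆ φ V) (U ∆ V) := by
      refine disjoint_left.2 fun x hx hxUV => ?_
      have hmem := congrArg (x ∈ ·) hUV
      grind [mem_symmDiff]
    refine (hφ U (hU.2.trans hBN) V (hV.2.trans hBN) hdisj).resolve_right ?_
    rintro rfl
    have hA : A = ∅ := disjoint_self.1 (disjoint_sdiff_self_left.mono hU.1 hV.1)
    have hNB : N ⊆ B := by
      rw [← sdiff_union_of_subset (hV.2.trans hBN)]
      exact union_subset hU.2 hV.2
    exact hproper ⟨hA, hBN.antisymm hNB⟩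

/-! ### Outmaps on an abstract coordinate set -/

section PseudoSzaboWelzl

variable {α : Type*} [Fintype α] [DecidableEq α]

/-- The condition on an outmap of the cube with coordinate set `α` that makes it a PUSO: antipodal
vertices have the same value, and any two other vertices have values that differ at a coordinate at
which the vertices differ. It is stated contrapositively. -/
structure IsPseudoSzaboWelzl (φ : Finset α → Finset α) : Prop where
  map_compl : ∀ V, φ Vᶜ = φ V
  eq_or_eq_compl : ∀ U V, Disjoint (φ U ∆ φ V) (U ∆ V) → U = V ∨ U = Vᶜ

theorem IsPseudoSzaboWelzl.symmDiff_const {φ : Finset α → Finset α} (hφ : IsPseudoSzaboWelzl φ)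
    (T : Finset α) : IsPseudoSzaboWelzl fun V => φ V ∆ T where
  map_compl V := by rw [hφ.map_compl]
  eq_or_eq_compl U V h := hφ.eq_or_eq_compl U V <| by
    rwa [symmDiff_symmDiff_symmDiff_comm, symmDiff_self, symmDiff_bot] at h

end PseudoSzaboWelzl

section Extend

variable {N : Finset ℕ}

/-- The outmap on all finite sets of naturals which is `φ` on the cube with coordinate set `N`
and `∅` elsewhere. -/
def extendOutmap (φ : Finset N → Finset N) (V : Finset ℕ) : Finset ℕ :=
  if V ⊆ N then (φ (V.subtype (· ∈ N))).map (.subtype _) else ∅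

theorem extendOutmap_map (φ : Finset N → Finset N) (V : Finset N) :
    extendOutmap φ (V.map (.subtype _)) = (φ V).map (.subtype _) := by
  have hV : V.map (.subtype (· ∈ N)) ⊆ N := fun _ => property_of_mem_map_subtype V
  rw [extendOutmap, if_pos hV]
  congr 2
  ext i
  simp

theorem extendOutmap_injective : Function.Injective (extendOutmap (N := N)) := by
  intro φ ψ h
  funext V
  have hV := congrFun h (V.map (.subtype _))
  rwa [extendOutmap_map, extendOutmap_map, map_inj] at hV

theorem map_subtype_compl (V : Finset N) :
    Vᶜ.map (.subtype (· ∈ N)) = N \ V.map (.subtype _) := by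
  rw [compl_eq_univ_sdiff, Finset.map_sdiff, univ_eq_attach, attach_map_val]

theorem IsPseudoSzaboWelzl.extendOutmap_isPUSO {φ : Finset N → Finset N}
    (hφ : IsPseudoSzaboWelzl φ) (hN : N.Nonempty) : IsPUSO (extendOutmap φ) ∅ N := by
  have hlift : ∀ V ⊆ N, ∃ V' : Finset N, V'.map (.subtype _) = V := fun V hV =>
    ⟨V.subtype (· ∈ N), subtype_map_of_mem hV⟩
  have hinj : Function.Injective (Function.Embedding.subtype (· ∈ N)) :=
    (Function.Embedding.subtype _).injective
  refine isPUSO_of_antipodal hN (fun V hV => ?_) fun U hU V hV hdisj => ?_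
  · obtain ⟨V, rfl⟩ := hlift V hV
    rw [← map_subtype_compl, extendOutmap_map, extendOutmap_map, hφ.map_compl]
  · obtain ⟨U, rfl⟩ := hlift U hU
    obtain ⟨V, rfl⟩ := hlift V hV
    rw [extendOutmap_map, extendOutmap_map] at hdisj
    rw [← map_subtype_compl, map_inj, map_inj]
    rw [map_eq_image, map_eq_image, map_eq_image, map_eq_image, ← image_symmDiff _ _ hinj,
      ← image_symmDiff _ _ hinj, disjoint_image hinj] at hdisj
    exact hφ.eq_or_eq_compl U V hdisj

end Extend

theorem extendOutmap_mem_PUSOOutmaps {n : ℕ} (hn : 1 ≤ n)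
    {φ : Finset (Finset.Icc 1 n) → Finset (Finset.Icc 1 n)} (hφ : IsPseudoSzaboWelzl φ) :
    extendOutmap φ ∈ PUSOOutmaps n :=
  ⟨fun V hV => by rw [extendOutmap, if_pos hV]; exact fun _ => property_of_mem_map_subtype _,
    fun _ hV => if_neg hV, hφ.extendOutmap_isPUSO (nonempty_Icc.2 hn)⟩

theorem finite_PUSOOutmaps (n : ℕ) : (PUSOOutmaps n).Finite := by
  refine (Set.finite_range (extendOutmap (N := Finset.Icc 1 n))).subset ?_
  rintro φ ⟨hmaps, hempty, -⟩
  refine ⟨fun V => (φ (V.map (.subtype _))).subtype _, ?_⟩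
  funext V
  by_cases hV : V ⊆ Finset.Icc 1 n
  · rw [extendOutmap, if_pos hV, subtype_map_of_mem hV, subtype_map_of_mem (hmaps V hV)]
  · rw [extendOutmap, if_neg hV, hempty V hV]

theorem ncard_isPseudoSzaboWelzl_le_pusoCount {n : ℕ} (hn : 1 ≤ n) :
    {φ : Finset (Finset.Icc 1 n) → Finset (Finset.Icc 1 n) | IsPseudoSzaboWelzl φ}.ncard ≤
      pusoCount n :=
  Set.ncard_le_ncard_of_injOn extendOutmap (fun _ hφ => extendOutmap_mem_PUSOOutmaps hn hφ)
    extendOutmap_injective.injOn (finite_PUSOOutmaps n)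

/-! ### Sums and cardinalities of symmetric differences -/

section SymmDiff

variable {α : Type*} [DecidableEq α]

theorem sum_symmDiff_of_zmod_two {M : Type*} [AddCommGroup M] [Module (ZMod 2) M] (f : α → M)
    (A B : Finset α) : ∑ i ∈ A ∆ B, f i = ∑ i ∈ A, f i + ∑ i ∈ B, f i := by
  have hunion : ∑ i ∈ A ∆ B, f i = ∑ i ∈ A \ B, f i + ∑ i ∈ B \ A, f i :=
    sum_union disjoint_sdiff_sdiff
  rw [hunion, ← sum_inter_add_sum_sdiff A B f, ← sum_inter_add_sum_sdiff B A f, inter_comm B A,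
    add_add_add_comm, ZModModule.add_self, zero_add]

theorem even_card_symmDiff (A B : Finset α) : Even #(A ∆ B) ↔ (Even #A ↔ Even #B) := by
  have hcast : (#(A ∆ B) : ZMod 2) = (#A + #B : ℕ) := by
    simpa using sum_symmDiff_of_zmod_two (fun _ => (1 : ZMod 2)) A B
  rw [← Nat.even_add, ← ZMod.natCast_eq_zero_iff_even, hcast, ZMod.natCast_eq_zero_iff_even]

theorem compl_symmDiff_left {β : Type*} [BooleanAlgebra β] (a b : β) : aᶜ ∆ b = (a ∆ b)ᶜ := by
  rw [← hnot_eq_compl, ← hnot_eq_compl, ← top_symmDiff, ← top_symmDiff, symmDiff_assoc]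

theorem card_symmDiff_le (A B : Finset α) : #(A ∆ B) ≤ #A + #B :=
  (card_le_card symmDiff_subset_union).trans (card_union_le A B)

end SymmDiff

/-! ### Cyclic boundaries -/

section Boundary

variable {α : Type*} [DecidableEq α] {σ : Equiv.Perm α}

/-- The set of `i` at which membership in `V` changes between `i` and `σ i`; for cyclic `σ` this is
the edge boundary of `V` in a cycle graph, with the edge from `i` to `σ i` represented by `i`. -/
def cyclicBoundary (σ : Equiv.Perm α) (V : Finset α) : Finset α :=
  V ∆ V.map σ.symm.toEmbedding

theorem mem_cyclicBoundary {V : Finset α} {i : α} :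
    i ∈ cyclicBoundary σ V ↔ ¬(i ∈ V ↔ σ i ∈ V) := by
  simp only [cyclicBoundary, mem_symmDiff, mem_map_equiv, Equiv.symm_symm]
  tauto

theorem cyclicBoundary_symmDiff (U V : Finset α) :
    cyclicBoundary σ (U ∆ V) = cyclicBoundary σ U ∆ cyclicBoundary σ V := by
  ext i
  simp only [mem_cyclicBoundary, mem_symmDiff]
  tauto

theorem cyclicBoundary_singleton (x : α) : cyclicBoundary σ {σ x} = {x} ∆ {σ x} := by
  rw [cyclicBoundary, map_singleton, symmDiff_comm]
  simp

theorem cyclicBoundary_compl [Fintype α] (V : Finset α) :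
    cyclicBoundary σ Vᶜ = cyclicBoundary σ V := by
  ext i
  simp only [mem_cyclicBoundary, mem_compl, not_iff_not]

theorem card_cyclicBoundary_inter (σ : Equiv.Perm α) (V : Finset α) :
    #(cyclicBoundary σ V ∩ V) = #(cyclicBoundary σ V \ V) := by
  have hinter : cyclicBoundary σ V ∩ V = V \ V.map σ.symm.toEmbedding := by
    grind [cyclicBoundary, mem_symmDiff]
  have hsdiff : cyclicBoundary σ V \ V = V.map σ.symm.toEmbedding \ V := by
    grind [cyclicBoundary, mem_symmDiff]
  rw [hinter, hsdiff]
  exact card_sdiff_comm (card_map _).symm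

theorem even_card_cyclicBoundary (σ : Equiv.Perm α) (V : Finset α) :
    Even #(cyclicBoundary σ V) := by
  simp only [cyclicBoundary, even_card_symmDiff, card_map]

variable [Fintype α]

theorem eq_empty_or_univ_of_cyclicBoundary_eq_empty (hσ : σ.IsCycleOn Set.univ) {W : Finset α}
    (hW : cyclicBoundary σ W = ∅) : W = ∅ ∨ W = univ := by
  have hmaps : Set.MapsTo σ W W := fun i hi => by
    have := mt mem_cyclicBoundary.2 (hW ▸ notMem_empty i)
    simp_all
  refine W.eq_empty_or_nonempty.imp_right fun ⟨a, ha⟩ => eq_univ_of_forall fun b => ?_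
  obtain ⟨m, rfl⟩ := hσ.exists_pow_eq' Set.finite_univ (Set.mem_univ a) (Set.mem_univ b)
  rw [Equiv.Perm.coe_pow]
  exact hmaps.iterate m ha

theorem cyclicBoundary_eq_iff (hσ : σ.IsCycleOn Set.univ) {U V : Finset α} :
    cyclicBoundary σ U = cyclicBoundary σ V ↔ U = V ∨ U = Vᶜ := by
  refine ⟨fun h => ?_, ?_⟩
  · have hempty : cyclicBoundary σ (U ∆ V) = ∅ := by
      rw [cyclicBoundary_symmDiff, h, symmDiff_self, bot_eq_empty]
    refine (eq_empty_or_univ_of_cyclicBoundary_eq_empty hσ hempty).imp symmDiff_eq_empty.1 ?_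
    exact fun hUV => eq_compl_iff_isCompl.2 ((symmDiff_eq_top U V).1 hUV)
  · rintro (rfl | rfl)
    · rfl
    · exact cyclicBoundary_compl V

theorem two_pow_card_le_two_mul_card_image_cyclicBoundary (hσ : σ.IsCycleOn Set.univ) :
    2 ^ Fintype.card α ≤ 2 * #(univ.image (cyclicBoundary σ)) := by
  rw [← Fintype.card_finset, ← card_univ]
  refine card_le_mul_card_image univ 2 fun A hA => ?_
  obtain ⟨V, -, rfl⟩ := mem_image.1 hA
  refine (card_le_card fun U hU => ?_).trans (card_le_two (a := V) (b := Vᶜ))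
  simpa using (cyclicBoundary_eq_iff hσ).1 (mem_filter.1 hU).2

end Boundary

/-! ### Star packings -/

section StarPacking

variable {α : Type*} [DecidableEq α] {F : Finset (Finset α)} {A B : Finset α}

/-- No set has two neighbours in `F` along edges of the cube: the stars centred at the elements
of `F` have no common leaf. -/
def IsStarPacking (F : Finset (Finset α)) : Prop :=
  ∀ ⦃A : Finset α⦄ ⦃x y : α⦄, A ∆ {x} ∈ F → A ∆ {y} ∈ F → x = y

theorem IsStarPacking.mono {K : Finset (Finset α)} (hK : IsStarPacking K) (hFK : F ⊆ K) :
    IsStarPacking F :=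
  fun _ _ _ hx hy => hK (hFK hx) (hFK hy)

theorem isStarPacking_of_sum_eq {M : Type*} [AddCommGroup M] [Module (ZMod 2) M] {f : α → M}
    (hf : Function.Injective f) {s : M} (hF : ∀ C ∈ F, ∑ i ∈ C, f i = s) : IsStarPacking F := by
  intro A x y hx hy
  have hsum := (hF _ hx).trans (hF _ hy).symm
  rw [sum_symmDiff_of_zmod_two, sum_symmDiff_of_zmod_two, sum_singleton, sum_singleton] at hsum
  exact hf (add_left_cancel hsum)

theorem IsStarPacking.eq_of_symmDiff_eq (hF : IsStarPacking F) {c d : α} (hA : A ∈ F) (hB : B ∈ F)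
    (hAB : A ∆ B = {c} ∆ {d}) : c = d := by
  refine hF (A := A ∆ {c}) (by rwa [symmDiff_symmDiff_cancel_right]) ?_
  rwa [symmDiff_assoc, ← hAB, symmDiff_symmDiff_cancel_left]

theorem pair_eq_symmDiff {a b : α} (hab : a ≠ b) : ({a, b} : Finset α) = {a} ∆ {b} :=
  (symmDiff_eq_union (disjoint_singleton.2 hab)).symm

variable [Fintype α]

/-- The directions of the edges of the cube that lead from `A` to an element of `F`. -/
def starDirections (F : Finset (Finset α)) (A : Finset α) : Finset α := {x | A ∆ {x} ∈ F}

theorem mem_starDirections {x : α} : x ∈ starDirections F A ↔ A ∆ {x} ∈ F := by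
  simp [starDirections]

theorem IsStarPacking.starDirections_eq_singleton (hF : IsStarPacking F) {x : α}
    (hx : A ∆ {x} ∈ F) : starDirections F A = {x} := by
  ext y
  rw [mem_starDirections, mem_singleton]
  exact ⟨fun hy => hF hy hx, fun hy => hy ▸ hx⟩

theorem IsStarPacking.card_starDirections_le_one (hF : IsStarPacking F) :
    #(starDirections F A) ≤ 1 :=
  card_le_one.2 fun _ hx _ hy => hF (mem_starDirections.1 hx) (mem_starDirections.1 hy)

theorem IsStarPacking.mem_starDirections_sdiff (hF : IsStarPacking F) {a b : α} (hab : a ≠ b)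
    (hAB : A ∆ B = {a} ∆ {b}) (ha : a ∈ starDirections F A) :
    b ∈ starDirections F B \ starDirections F A := by
  have hneighbour : B ∆ {b} = A ∆ {a} := by
    rw [← symmDiff_symmDiff_cancel_left A B, hAB, symmDiff_assoc A, symmDiff_symmDiff_cancel_right]
  rw [mem_starDirections] at ha
  rw [mem_sdiff, mem_starDirections, mem_starDirections, hneighbour]
  exact ⟨ha, fun hb => hab (hF ha hb)⟩

theorem IsStarPacking.mem_starDirections_symmDiff (hF : IsStarPacking F) {a b : α} (hab : a ≠ b)
    (hAB : A ∆ B = {a} ∆ {b}) (ha : a ∈ starDirections F A ∆ starDirections F B) :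
    b ∈ starDirections F A ∆ starDirections F B := by
  rcases mem_symmDiff.1 ha with ⟨ha, -⟩ | ⟨ha, -⟩
  · exact mem_union_right _ (hF.mem_starDirections_sdiff hab hAB ha)
  · exact mem_union_left _ (hF.mem_starDirections_sdiff hab (symmDiff_comm A B ▸ hAB) ha)

theorem IsStarPacking.card_sdiff_ne_two (hF : IsStarPacking F)
    (htwo : 2 ≤ #((A ∆ B) ∩ (starDirections F A ∆ starDirections F B))) :
    #((A ∆ B) \ (starDirections F A ∆ starDirections F B)) ≠ 2 := by
  intro hsdiff
  obtain ⟨c, d, hcd, hrest⟩ := card_eq_two.1 hsdiff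
  have hsum : 2 ≤ #(starDirections F A) + #(starDirections F B) :=
    (htwo.trans (card_le_card inter_subset_right)).trans (card_symmDiff_le _ _)
  have hA := hF.card_starDirections_le_one (A := A)
  have hB := hF.card_starDirections_le_one (A := B)
  have hsub : starDirections F A ∆ starDirections F B ⊆ A ∆ B :=
    inter_eq_right.1 <| eq_of_subset_of_card_le inter_subset_right <|
      ((card_symmDiff_le _ _).trans (add_le_add hA hB)).trans htwo
  obtain ⟨a, ha⟩ := card_eq_one.1 (by omega : #(starDirections F A) = 1)
  obtain ⟨b, hb⟩ := card_eq_one.1 (by omega : #(starDirections F B) = 1)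
  refine hcd (hF.eq_of_symmDiff_eq (A := A ∆ {a}) (B := B ∆ {b}) ?_ ?_ ?_)
  · exact mem_starDirections.1 (ha ▸ mem_singleton_self a)
  · exact mem_starDirections.1 (hb ▸ mem_singleton_self b)
  · rw [symmDiff_symmDiff_symmDiff_comm, ← ha, ← hb, symmDiff_of_ge hsub, hrest,
      pair_eq_symmDiff hcd]

theorem IsStarPacking.eq_of_card_inter_eq_card_sdiff (hF : IsStarPacking F)
    (hcard : #((A ∆ B) ∩ (starDirections F A ∆ starDirections F B)) =
      #((A ∆ B) \ (starDirections F A ∆ starDirections F B))) : A = B := by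
  have hle : #((A ∆ B) ∩ (starDirections F A ∆ starDirections F B)) ≤ 2 :=
    calc #((A ∆ B) ∩ (starDirections F A ∆ starDirections F B))
      _ ≤ #(starDirections F A ∆ starDirections F B) := card_le_card inter_subset_right
      _ ≤ #(starDirections F A) + #(starDirections F B) := card_symmDiff_le _ _
      _ ≤ 2 := add_le_add hF.card_starDirections_le_one hF.card_starDirections_le_one
  have hdecomp := sdiff_union_inter (A ∆ B) (starDirections F A ∆ starDirections F B)
  obtain htwo | hlt := hle.eq_or_lt
  · exact absurd (hcard.symm.trans htwo) (hF.card_sdiff_ne_two htwo.ge)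
  obtain hzero | hone := Nat.le_one_iff_eq_zero_or_eq_one.1 (Nat.le_of_lt_succ hlt)
  · rw [card_eq_zero.1 hzero, card_eq_zero.1 (hcard.symm.trans hzero), union_empty] at hdecomp
    exact symmDiff_eq_bot.1 hdecomp.symm
  · obtain ⟨a, ha⟩ := card_eq_one.1 hone
    obtain ⟨b, hb⟩ := card_eq_one.1 (hcard.symm.trans hone)
    have haS := mem_inter.1 (ha ▸ mem_singleton_self a)
    have hbS := mem_sdiff.1 (hb ▸ mem_singleton_self b)
    have hab : a ≠ b := fun h => hbS.2 (h ▸ haS.2)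
    rw [ha, hb, union_comm, singleton_union, pair_eq_symmDiff hab] at hdecomp
    exact absurd (hF.mem_starDirections_symmDiff hab hdecomp.symm haS.2) hbS.2

theorem exists_isStarPacking_card_ge {σ : Equiv.Perm α} (hσ : σ.IsCycleOn Set.univ) (x₀ : α) {k : ℕ}
    (hk : Fintype.card α ≤ 2 ^ k) (hk' : k < Fintype.card α) :
    ∃ K : Finset (Finset α), IsStarPacking K ∧
      K ⊆ univ.image (fun V => cyclicBoundary σ V ∆ {x₀}) ∧ 2 ^ (Fintype.card α - 1 - k) ≤ #K := by
  obtain ⟨f⟩ : Nonempty (α ↪ (Fin k → ZMod 2)) :=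
    Function.Embedding.nonempty_of_card_le (by simpa [ZMod.card] using hk)
  have hcard : 2 ^ k * 2 ^ (Fintype.card α - 1 - k) ≤
      #(univ.image fun V => cyclicBoundary σ V ∆ {x₀}) := by
    have htwo := two_pow_card_le_two_mul_card_image_cyclicBoundary hσ
    rw [← Nat.sub_add_cancel (Nat.one_le_of_lt hk'), pow_succ', Nat.mul_le_mul_left_iff two_pos]
      at htwo
    have hshift : #(univ.image fun V => cyclicBoundary σ V ∆ {x₀}) =
        #(univ.image (cyclicBoundary σ)) := by
      rw [← card_image_of_injective (univ.image (cyclicBoundary σ)) (symmDiff_left_injective {x₀}),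
        image_image, Function.comp_def]
    rwa [hshift, ← pow_add, Nat.add_sub_cancel' (Nat.le_sub_one_of_lt hk')]
  obtain ⟨s, -, hs⟩ := exists_le_card_fiber_of_mul_le_card_of_maps_to (t := univ)
    (f := fun C => ∑ i ∈ C, f i) (fun _ _ => mem_univ _) univ_nonempty
    (by simpa [ZMod.card] using hcard)
  exact ⟨_, isStarPacking_of_sum_eq f.injective fun C hC => (mem_filter.1 hC).2,
    filter_subset _ _, hs⟩

end StarPacking

/-! ### Redirected boundary outmaps -/

section RedirectedBoundary

variable {α : Type*} [Fintype α] [DecidableEq α] {σ : Equiv.Perm α} {F K : Finset (Finset α)}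

/-- The outmap obtained from `cyclicBoundary σ` by redirecting along the stars of the star packing
`F`: the vertex `V' ∆ starDirections F (cyclicBoundary σ V')` has the value `cyclicBoundary σ V'`,
see `IsStarPacking.exists_redirect`. Since `starDirections F _` has at most one element, the
definition replaces `V` by `V ∆ {σ x}` if `cyclicBoundary σ V ∆ {x} ∈ F`. -/
def redirectedBoundary (σ : Equiv.Perm α) (F : Finset (Finset α)) (V : Finset α) : Finset α :=
  cyclicBoundary σ (V ∆ (starDirections F (cyclicBoundary σ V)).map σ.toEmbedding)

theorem even_card_redirectedBoundary (V : Finset α) : Even #(redirectedBoundary σ F V) :=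
  even_card_cyclicBoundary _ _

theorem redirectedBoundary_compl (V : Finset α) :
    redirectedBoundary σ F Vᶜ = redirectedBoundary σ F V := by
  rw [redirectedBoundary, cyclicBoundary_compl, compl_symmDiff_left, cyclicBoundary_compl,
    redirectedBoundary]

theorem redirectedBoundary_of_starDirections_eq_empty {V : Finset α}
    (hV : starDirections F (cyclicBoundary σ V) = ∅) :
    redirectedBoundary σ F V = cyclicBoundary σ V := by
  rw [redirectedBoundary, hV, map_empty, ← bot_eq_empty, symmDiff_bot]

theorem redirectedBoundary_of_starDirections_eq_singleton {V : Finset α} {x : α}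
    (hx : starDirections F (cyclicBoundary σ V) = {x}) :
    redirectedBoundary σ F V = cyclicBoundary σ V ∆ {x} ∆ {σ x} := by
  rw [redirectedBoundary, hx, map_singleton, Equiv.coe_toEmbedding, cyclicBoundary_symmDiff,
    cyclicBoundary_singleton, symmDiff_assoc]

theorem IsStarPacking.exists_redirect (hF : IsStarPacking F) (σ : Equiv.Perm α) (V : Finset α) :
    ∃ V', redirectedBoundary σ F V = cyclicBoundary σ V' ∧
      V = V' ∆ starDirections F (cyclicBoundary σ V') := by
  refine ⟨_, rfl, ?_⟩
  change V = _ ∆ starDirections F (redirectedBoundary σ F V)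
  rcases (starDirections F (cyclicBoundary σ V)).eq_empty_or_nonempty with hV | ⟨x, hx⟩
  · rw [redirectedBoundary_of_starDirections_eq_empty hV, hV, map_empty, ← bot_eq_empty,
      symmDiff_bot, symmDiff_bot]
  · have hC := mem_starDirections.1 hx
    have hV := hF.starDirections_eq_singleton hC
    have hV' : starDirections F (redirectedBoundary σ F V) = {σ x} := by
      refine hF.starDirections_eq_singleton ?_
      rwa [redirectedBoundary_of_starDirections_eq_singleton hV, symmDiff_symmDiff_cancel_right]
    rw [hV', hV, map_singleton, Equiv.coe_toEmbedding, symmDiff_symmDiff_cancel_right]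

theorem IsStarPacking.cyclicBoundary_eq_of_disjoint (hF : IsStarPacking F) {U V : Finset α}
    (h : Disjoint (cyclicBoundary σ U ∆ cyclicBoundary σ V)
      ((U ∆ starDirections F (cyclicBoundary σ U)) ∆
        (V ∆ starDirections F (cyclicBoundary σ V)))) :
    cyclicBoundary σ U = cyclicBoundary σ V := by
  refine hF.eq_of_card_inter_eq_card_sdiff ?_
  rw [symmDiff_symmDiff_symmDiff_comm] at h
  generalize starDirections F (cyclicBoundary σ U) ∆ starDirections F (cyclicBoundary σ V) = S at *
  rw [← cyclicBoundary_symmDiff] at h ⊢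
  have hiff : ∀ x ∈ cyclicBoundary σ (U ∆ V), x ∈ S ↔ x ∈ U ∆ V := fun x hx => by
    have hxS := disjoint_left.1 h hx
    rw [mem_symmDiff] at hxS
    tauto
  have hinter : cyclicBoundary σ (U ∆ V) ∩ S = cyclicBoundary σ (U ∆ V) ∩ (U ∆ V) := by
    grind
  have hsdiff : cyclicBoundary σ (U ∆ V) \ S = cyclicBoundary σ (U ∆ V) \ (U ∆ V) := by
    grind
  rw [hinter, hsdiff, card_cyclicBoundary_inter]

theorem IsStarPacking.isPseudoSzaboWelzl_redirectedBoundary (hF : IsStarPacking F)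
    (hσ : σ.IsCycleOn Set.univ) : IsPseudoSzaboWelzl (redirectedBoundary σ F) where
  map_compl := redirectedBoundary_compl
  eq_or_eq_compl U V hdisj := by
    obtain ⟨U', hU', hU⟩ := hF.exists_redirect σ U
    obtain ⟨V', hV', hV⟩ := hF.exists_redirect σ V
    rw [hU', hV', hU, hV] at hdisj
    have hbd := hF.cyclicBoundary_eq_of_disjoint hdisj
    rw [hU, hV, hbd, ← compl_symmDiff_left, symmDiff_left_inj, symmDiff_left_inj]
    exact (cyclicBoundary_eq_iff hσ).1 hbd

theorem IsStarPacking.subset_of_redirectedBoundary_eq {F' : Finset (Finset α)} {x₀ : α}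
    (hK : IsStarPacking K) (hx₀ : σ x₀ ≠ x₀)
    (hKσ : K ⊆ univ.image fun V => cyclicBoundary σ V ∆ {x₀}) (hF : F ⊆ K) (hF' : F' ⊆ K)
    (h : redirectedBoundary σ F = redirectedBoundary σ F') : F ⊆ F' := by
  intro C hC
  obtain ⟨V, -, rfl⟩ := mem_image.1 (hKσ (hF hC))
  by_contra hCF'
  have hdir : starDirections F (cyclicBoundary σ V) = {x₀} :=
    (hK.mono hF).starDirections_eq_singleton hC
  have hdir' : starDirections F' (cyclicBoundary σ V) = ∅ := by
    refine eq_empty_of_forall_notMem fun y hy => hCF' ?_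
    rw [mem_starDirections] at hy
    rwa [hK (hF hC) (hF' hy)]
  have heq := congrFun h V
  rw [redirectedBoundary_of_starDirections_eq_singleton hdir,
    redirectedBoundary_of_starDirections_eq_empty hdir', symmDiff_assoc, symmDiff_eq_left,
    symmDiff_eq_bot, singleton_inj] at heq
  exact hx₀ heq.symm

theorem eq_of_redirectedBoundary_symmDiff_eq {F' : Finset (Finset α)} {x₀ : α} {T T' : Finset α}
    (hT : T = ∅ ∨ T = {x₀}) (hT' : T' = ∅ ∨ T' = {x₀}) {V : Finset α}
    (h : redirectedBoundary σ F V ∆ T = redirectedBoundary σ F' V ∆ T') : T = T' := by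
  have heven := congrArg (Even #·) h
  simp only [even_card_symmDiff, even_card_redirectedBoundary, true_iff, eq_iff_iff] at heven
  rcases hT with rfl | rfl <;> rcases hT' with rfl | rfl <;> simp_all

theorem IsStarPacking.two_pow_card_add_one_le_ncard {x₀ : α} (hK : IsStarPacking K)
    (hσ : σ.IsCycleOn Set.univ) (hx₀ : σ x₀ ≠ x₀)
    (hKσ : K ⊆ univ.image fun V => cyclicBoundary σ V ∆ {x₀}) :
    2 ^ (#K + 1) ≤ {φ : Finset α → Finset α | IsPseudoSzaboWelzl φ}.ncard := by
  let S : Finset (Finset (Finset α) × Finset α) := K.powerset ×ˢ {∅, {x₀}}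
  have hS : #S = 2 ^ (#K + 1) := by
    rw [card_product, card_powerset, card_pair (singleton_ne_empty x₀).symm, pow_succ]
  rw [← hS, ← Set.ncard_coe_finset]
  refine Set.ncard_le_ncard_of_injOn (fun p V => redirectedBoundary σ p.1 V ∆ p.2) ?_ ?_
    (Set.toFinite _)
  · rintro ⟨F, T⟩ hp
    have hF : F ⊆ K := mem_powerset.1 (mem_product.1 hp).1
    exact ((hK.mono hF).isPseudoSzaboWelzl_redirectedBoundary hσ).symmDiff_const T
  · rintro ⟨F, T⟩ hp ⟨F', T'⟩ hp' h
    obtain ⟨hF, hT⟩ := mem_product.1 (mem_coe.1 hp)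
    obtain ⟨hF', hT'⟩ := mem_product.1 (mem_coe.1 hp')
    rw [mem_powerset] at hF hF'
    rw [mem_insert, mem_singleton] at hT hT'
    obtain rfl : T = T' := eq_of_redirectedBoundary_symmDiff_eq hT hT' (congrFun h ∅)
    have hFF' : redirectedBoundary σ F = redirectedBoundary σ F' :=
      funext fun V => symmDiff_left_injective T (congrFun h V)
    have hsub := hK.subset_of_redirectedBoundary_eq hx₀ hKσ hF hF' hFF'
    have hsup := hK.subset_of_redirectedBoundary_eq hx₀ hKσ hF' hF hFF'.symm
    exact congrArg (·, T) (hsub.antisymm hsup)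

end RedirectedBoundary

theorem puso_lower_bound_general (n : ℕ) (hn : 2 ≤ n) :
    2 ^ (2 ^ (n - 1 - Nat.clog 2 n) + 1) ≤ pusoCount n := by
  have hcard : Fintype.card (Finset.Icc 1 n) = n := by simp
  have : Nontrivial (Finset.Icc 1 n) := Fintype.one_lt_card_iff_nontrivial.1 (by omega)
  obtain ⟨σ, hσ, -⟩ := (univ : Finset (Finset.Icc 1 n)).exists_cycleOn
  rw [coe_univ] at hσ
  obtain ⟨x₀⟩ : Nonempty (Finset.Icc 1 n) := inferInstance
  have hx₀ : σ x₀ ≠ x₀ := hσ.apply_ne Set.nontrivial_univ (Set.mem_univ x₀)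
  have hclog : Nat.clog 2 n < n :=
    (Nat.clog_le_of_le_pow (by have := (n - 1).lt_two_pow_self; omega)).trans_lt
      (Nat.sub_one_lt_of_lt hn)
  obtain ⟨K, hK, hKσ, hcardK⟩ := exists_isStarPacking_card_ge hσ x₀
    (hcard.trans_le (Nat.le_pow_clog one_lt_two n)) (hclog.trans_eq hcard.symm)
  rw [hcard] at hcardK
  calc 2 ^ (2 ^ (n - 1 - Nat.clog 2 n) + 1)
    _ ≤ 2 ^ (#K + 1) := Nat.pow_le_pow_right two_pos (Nat.add_le_add_right hcardK 1)
    _ ≤ {φ : Finset (Finset.Icc 1 n) → Finset (Finset.Icc 1 n) | IsPseudoSzaboWelzl φ}.ncard :=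
      hK.two_pow_card_add_one_le_ncard hσ hx₀ hKσ
    _ ≤ pusoCount n := ncard_isPseudoSzaboWelzl_le_pusoCount (one_le_two.trans hn)

/-- Lower bound on the number of PUSOs: for `n = 2^k` with `k ≥ 2`,
`puso(n) ≥ 2^(2^(n-1-k)+1)` (note `k = log₂ n`). -/
theorem puso_lower_bound (n k : ℕ) (hk : 2 ≤ k) (hn : n = 2 ^ k) :
    2 ^ (2 ^ (n - 1 - k) + 1) ≤ pusoCount n := by
  have hn2 : 2 ≤ n := hn ▸ (Nat.le_self_pow (by omega) 2)
  simpa only [hn, Nat.clog_pow 2 k one_lt_two] using puso_lower_bound_general n hn2
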